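/- arXiv:2210.15783 — 3 statements merged into one kernel-verified Lean document; each statement's English description precedes it below -/
import Mathlib

section
/- Let N ≥ 1, let λ : Fin N → ℂ with λ₁ := λ 0 real, and suppose Re(λ_m) < Re(λ₁) for every m ≠ 0. Let z, w : Fin N → ℂ and let s̄ be an N×N complex matrix, and define 𝒩(t) = Σ_{m,n} z_m w_n s̄_{mn} φ_{λ_m λ_n}(t). Then 𝒩(t) e^{−λ₁ t} − (z₁ w₁ s̄₁₁ t + g₀) tends to 0 as t → ∞, where g₀ = Σ_{n≠0} z₁ w_n s̄_{1n}/(λ₁ − λ_n) − Σ_{m≠0} z_m w₁ s̄_{m1}/(λ_m − λ₁) (indices written 1-based, so z₁ = z 0, s̄₁₁ = s̄ 0 0, etc.). -/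
open Filter Finset

/-- `φ_{λμ}(t)`. -/
noncomputable def phi (lam mu : ℂ) (t : ℝ) : ℂ :=
  if lam = mu then (t : ℂ) * Complex.exp (lam * t)
  else (Complex.exp (lam * t) - Complex.exp (mu * t)) / (lam - mu)

theorem aux_exp (a : ℂ) (ha : a.re < 0) :
    Tendsto (fun t : ℝ => Complex.exp (a * t)) atTop (nhds 0) := by
  rw [tendsto_zero_iff_norm_tendsto_zero]
  simp only [Complex.norm_exp, Complex.mul_re, Complex.ofReal_re, Complex.ofReal_im, mul_zero,
    sub_zero]
  exact Real.tendsto_exp_atBot.comp (tendsto_id.const_mul_atTop_of_neg ha)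

theorem aux_texp (a : ℂ) (ha : a.re < 0) :
    Tendsto (fun t : ℝ => (t : ℂ) * Complex.exp (a * t)) atTop (nhds 0) := by
  rw [tendsto_zero_iff_norm_tendsto_zero]
  simp only [norm_mul, Complex.norm_exp, Complex.mul_re, Complex.ofReal_re, Complex.ofReal_im,
    mul_zero, sub_zero, Complex.norm_real, Real.norm_eq_abs]
  have h := tendsto_rpow_mul_exp_neg_mul_atTop_nhds_zero 1 (-a.re) (by linarith)
  refine h.congr' ?_
  filter_upwards [eventually_ge_atTop 0] with t ht
  simp [abs_of_nonneg ht]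

theorem aux_phi (l a b : ℂ) (ha : a.re < l.re) (hb : b.re < l.re) :
    Tendsto (fun t : ℝ => phi a b t * Complex.exp (-l * t)) atTop (nhds 0) := by
  by_cases h : a = b
  · subst h
    refine (aux_texp (a - l) (by simpa using ha)).congr fun t => ?_
    simp only [phi, if_true]
    rw [mul_assoc, ← Complex.exp_add]
    ring_nf
  · have := ((aux_exp (a - l) (by simpa using ha)).sub
      (aux_exp (b - l) (by simpa using hb))).div_const (a - b)
    simp only [sub_zero, zero_div] at this
    refine this.congr fun t => ?_
    simp only [phi, if_neg h]
    rw [div_mul_eq_mul_div, sub_mul (Complex.exp _), ← Complex.exp_add, ← Complex.exp_add]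
    ring_nf

theorem aux_left (l b : ℂ) (hb : b.re < l.re) :
    Tendsto (fun t : ℝ => phi l b t * Complex.exp (-l * t) - 1 / (l - b)) atTop (nhds 0) := by
  have h : l ≠ b := by rintro rfl; exact lt_irrefl _ hb
  have := ((aux_exp (b - l) (by simpa using hb)).neg).div_const (l - b)
  simp only [neg_zero, zero_div] at this
  refine this.congr fun t => ?_
  simp only [phi, if_neg h]
  rw [div_mul_eq_mul_div, sub_mul (Complex.exp _), ← Complex.exp_add, ← Complex.exp_add, ← sub_div]
  have e : l * t + -l * t = 0 := by ring
  rw [e, Complex.exp_zero]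
  ring_nf

theorem aux_symm (a b : ℂ) (t : ℝ) : phi a b t = phi b a t := by
  by_cases h : a = b
  · rw [h]
  · have h' : b ≠ a := fun e => h e.symm
    simp only [phi, if_neg h, if_neg h']
    rw [← neg_div_neg_eq, neg_sub, neg_sub]

theorem aux_diag (l : ℂ) (t : ℝ) : phi l l t * Complex.exp (-l * t) = t := by
  simp only [phi, if_true]
  rw [mul_assoc, ← Complex.exp_add]
  have e : l * t + -l * t = 0 := by ring
  rw [e, Complex.exp_zero, mul_one]

/-- Asymptotics of the rescaled numerator `𝒩(t) e^{-λ₁ t}` of the log-sensitivity: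
it approaches `z₁ w₁ s̄₁₁ t + g₀` as `t → ∞`. -/
theorem stmt3 {N : ℕ} (hN : 1 ≤ N) (lam : Fin N → ℂ)
    (z w : Fin N → ℂ) (sbar : Matrix (Fin N) (Fin N) ℂ)
    (hreal : (lam ⟨0, hN⟩).im = 0)
    (hdom : ∀ m : Fin N, m ≠ ⟨0, hN⟩ → (lam m).re < (lam ⟨0, hN⟩).re) :
    Filter.Tendsto
      (fun t : ℝ =>
        (∑ m : Fin N, ∑ n : Fin N, z m * w n * sbar m n * phi (lam m) (lam n) t)
            * Complex.exp (-(lam ⟨0, hN⟩) * t)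
          - (z ⟨0, hN⟩ * w ⟨0, hN⟩ * sbar ⟨0, hN⟩ ⟨0, hN⟩ * (t : ℂ)
              + ((∑ n ∈ Finset.univ.erase ⟨0, hN⟩,
                    z ⟨0, hN⟩ * w n * sbar ⟨0, hN⟩ n / (lam ⟨0, hN⟩ - lam n))
                - (∑ m ∈ Finset.univ.erase ⟨0, hN⟩,
                    z m * w ⟨0, hN⟩ * sbar m ⟨0, hN⟩ / (lam m - lam ⟨0, hN⟩)))))
      Filter.atTop (nhds 0) := by
  generalize (⟨0, hN⟩ : Fin N) = o at *
  have h1 : Tendsto (fun t : ℝ => ∑ n ∈ Finset.univ.erase o, z o * w n * sbar o n *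
      (phi (lam o) (lam n) t * Complex.exp (-(lam o) * t) - 1 / (lam o - lam n)))
      atTop (nhds 0) := by
    rw [← Finset.sum_const_zero (s := Finset.univ.erase o)]
    refine tendsto_finsetSum _ fun n hn => ?_
    simpa using (aux_left _ _ (hdom n (Finset.ne_of_mem_erase hn))).const_mul
      (z o * w n * sbar o n)
  have h2 : Tendsto (fun t : ℝ => ∑ m ∈ Finset.univ.erase o, z m * w o * sbar m o *
      (phi (lam m) (lam o) t * Complex.exp (-(lam o) * t) - 1 / (lam o - lam m)))
      atTop (nhds 0) := by
    rw [← Finset.sum_const_zero (s := Finset.univ.erase o)]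
    refine tendsto_finsetSum _ fun n hn => ?_
    simp only [aux_symm (lam n) (lam o)]
    simpa using (aux_left _ _ (hdom n (Finset.ne_of_mem_erase hn))).const_mul
      (z n * w o * sbar n o)
  have h3 : Tendsto (fun t : ℝ => ∑ m ∈ Finset.univ.erase o, ∑ n ∈ Finset.univ.erase o,
      z m * w n * sbar m n * (phi (lam m) (lam n) t * Complex.exp (-(lam o) * t)))
      atTop (nhds 0) := by
    rw [← Finset.sum_const_zero (s := Finset.univ.erase o)]
    refine tendsto_finsetSum _ fun m hm => ?_
    rw [← Finset.sum_const_zero (s := Finset.univ.erase o)]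
    refine tendsto_finsetSum _ fun n hn => ?_
    simpa using (aux_phi _ _ _ (hdom m (Finset.ne_of_mem_erase hm))
      (hdom n (Finset.ne_of_mem_erase hn))).const_mul (z m * w n * sbar m n)
  have h := (h1.add h2).add h3
  simp only [add_zero] at h
  refine h.congr fun t => ?_
  have hs : ∀ f : Fin N → Fin N → ℂ, ∑ m, ∑ n, f m n = f o o + ∑ n ∈ Finset.univ.erase o, f o n
      + ∑ m ∈ Finset.univ.erase o, f m o
      + ∑ m ∈ Finset.univ.erase o, ∑ n ∈ Finset.univ.erase o, f m n := by
    intro f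
    rw [← Finset.add_sum_erase _ _ (Finset.mem_univ o), ← Finset.add_sum_erase _ (f o)
      (Finset.mem_univ o), add_assoc (f o o + _), ← Finset.sum_add_distrib]
    congr 1
    refine Finset.sum_congr rfl fun m _ => ?_
    rw [← Finset.add_sum_erase _ (f m) (Finset.mem_univ o)]
  have e2 : ∑ m ∈ Finset.univ.erase o, z m * w o * sbar m o / (lam m - lam o)
      = - ∑ m ∈ Finset.univ.erase o, z m * w o * sbar m o * (1 / (lam o - lam m)) := by
    rw [← Finset.sum_neg_distrib]
    refine Finset.sum_congr rfl fun m _ => ?_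
    rw [← neg_sub (lam o), div_neg, mul_one_div]
  simp only [Finset.sum_mul, mul_assoc (_ * _ * sbar _ _)]
  rw [hs, e2, aux_diag]
  simp only [mul_sub, Finset.sum_sub_distrib, mul_one_div]
  ring
end

section
/- Consider the two-spin chain engineered for perfect state transfer with λ = π/5, for which the transfer error is e(t) = (1/2)(1 + cos(πt/5)) and the sensitivity of the error to a perturbation of the coupling is d(t) = t·sin(πt/5). Then for every natural number n, at the perfect-transfer times t_n = 5(2n+1): (i) e(t_n) = 0; (ii) d(t_n) = 0 (the sensitivity vanishes); and (iii) the magnitude of the log-sensitivity diverges: |d(t)·(π/10)/e(t)| → +∞ as t → t_n with t ≠ t_n (limit along the punctured neighborhood filter 𝓝[≠] t_n is atTop). -/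
open Real Filter Topology

/-- Two-spin perfect state transfer: at the transfer times `t_n = 5(2n+1)` the error
`e(t) = (1/2)(1 + cos(πt/5))` and sensitivity `d(t) = t sin(πt/5)` both vanish, while the
magnitude of the log-sensitivity `|d(t)·(π/10)/e(t)|` diverges as `t → t_n`. -/
theorem stmt15 (n : ℕ) :
    ((1/2 : ℝ) * (1 + Real.cos (π * (5*(2*n+1) : ℝ) / 5)) = 0) ∧
    ((5*(2*n+1) : ℝ) * Real.sin (π * (5*(2*n+1) : ℝ) / 5) = 0) ∧
    Filter.Tendsto
      (fun t : ℝ => |t * Real.sin (π * t / 5) * (π/10) / ((1/2) * (1 + Real.cos (π * t / 5)))|)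
      (𝓝[≠] (5*(2*n+1) : ℝ)) Filter.atTop := by
  have hx : π * (5*(2*n+1) : ℝ) / 5 = π + n * (2 * π) := by ring
  have hc : Real.cos (π * (5*(2*n+1) : ℝ) / 5) = -1 := by
    rw [hx, Real.cos_add_nat_mul_two_pi, Real.cos_pi]
  have hs : Real.sin (π * (5*(2*n+1) : ℝ) / 5) = 0 := by
    rw [hx, Real.sin_add_nat_mul_two_pi, Real.sin_pi]
  refine ⟨by rw [hc]; norm_num, by rw [hs]; simp, ?_⟩
  set a : ℝ := 5*(2*n+1) with ha
  have ha0 : 0 < a := by positivity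
  have hd : HasDerivAt (fun t : ℝ => Real.sin (π * t / 5)) (Real.cos (π * a / 5) * (π * 1 / 5)) a :=
    (((hasDerivAt_id a).const_mul π).div_const 5).sin
  have hne : ∀ᶠ t in 𝓝[≠] a, Real.sin (π * t / 5) ≠ 0 := by
    refine hd.eventually_ne ?_
    rw [hc]
    have := Real.pi_pos
    intro h
    linarith
  have hnum : Tendsto (fun t : ℝ => |t * (1 - Real.cos (π * t / 5)) * (π / 5)|) (𝓝[≠] a)
      (𝓝 |a * (1 - Real.cos (π * a / 5)) * (π / 5)|) := by
    have : Continuous (fun t : ℝ => |t * (1 - Real.cos (π * t / 5)) * (π / 5)|) := by fun_prop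
    exact this.continuousAt.tendsto.mono_left nhdsWithin_le_nhds
  have hpos : 0 < |a * (1 - Real.cos (π * a / 5)) * (π / 5)| := by
    rw [hc]
    have := Real.pi_pos
    norm_num
    exact ha0.ne'
  have hsin : Tendsto (fun t : ℝ => |Real.sin (π * t / 5)|) (𝓝[≠] a) (𝓝[>] 0) := by
    rw [tendsto_nhdsWithin_iff]
    constructor
    · have : Continuous (fun t : ℝ => |Real.sin (π * t / 5)|) := by fun_prop
      have h2 := this.continuousAt.tendsto.mono_left (nhdsWithin_le_nhds (a := a) (s := {a}ᶜ))
      simpa [hs] using h2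
    · filter_upwards [hne] with t ht
      exact abs_pos.mpr ht
  have hmain := hnum.pos_mul_atTop hpos (tendsto_inv_nhdsGT_zero.comp hsin)
  refine hmain.congr' ?_
  filter_upwards [hne] with t ht
  have hsq := Real.sin_sq_add_cos_sq (π * t / 5)
  have h1 : 1 + Real.cos (π * t / 5) ≠ 0 := by
    intro h
    apply ht
    have : Real.cos (π * t / 5) = -1 := by linarith
    rw [this] at hsq
    exact pow_eq_zero_iff (two_ne_zero) |>.mp (by linarith)
  simp only [Function.comp]
  rw [← abs_inv, ← abs_mul]
  congr 1
  generalize Real.sin (π * t / 5) = S at *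
  generalize Real.cos (π * t / 5) = C at *
  rw [← div_eq_mul_inv, div_eq_div_iff ht (by simpa using h1)]
  linear_combination (-(t * π / 10)) * hsq
end

section
/- Consider the three-spin chain engineered for perfect state transfer with λ = π/5, for which the transfer error is e(t) = 5/8 + (1/2)cos(πt/5) − (1/8)cos(2πt/5) and the sensitivity of the error to a perturbation of the 2–3 coupling is d(t) = −(√2/4)·t·sin(πt/5) + (√2/8)·t·sin(2πt/5). Then for every natural number n, at the perfect-transfer times t_n = 5(2n+1): (i) e(t_n) = 0; (ii) d(t_n) = 0 (the sensitivity vanishes); and (iii) the magnitude of the log-sensitivity diverges: |d(t)·(√2·π/10)/e(t)| → +∞ as t → t_n with t ≠ t_n (limit along the punctured neighborhood filter 𝓝[≠] t_n is atTop). -/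
open Real Filter Topology

/-- Three-spin perfect state transfer: at the transfer times `t_n = 5(2n+1)` the error
`e(t) = 5/8 + (1/2)cos(πt/5) - (1/8)cos(2πt/5)` and the sensitivity
`d(t) = -(√2/4) t sin(πt/5) + (√2/8) t sin(2πt/5)` both vanish, while the magnitude of the
log-sensitivity `|d(t)·(√2·π/10)/e(t)|` diverges as `t → t_n`. -/
theorem stmt16 (n : ℕ) :
    ((5/8 : ℝ) + (1/2) * Real.cos (π * (5*(2*n+1) : ℝ) / 5)
        - (1/8) * Real.cos (2 * π * (5*(2*n+1) : ℝ) / 5) = 0) ∧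
    (-(Real.sqrt 2 / 4) * (5*(2*n+1) : ℝ) * Real.sin (π * (5*(2*n+1) : ℝ) / 5)
        + (Real.sqrt 2 / 8) * (5*(2*n+1) : ℝ) * Real.sin (2 * π * (5*(2*n+1) : ℝ) / 5) = 0) ∧
    Filter.Tendsto
      (fun t : ℝ =>
        |(-(Real.sqrt 2 / 4) * t * Real.sin (π * t / 5)
            + (Real.sqrt 2 / 8) * t * Real.sin (2 * π * t / 5)) * (Real.sqrt 2 * π / 10)
          / ((5/8) + (1/2) * Real.cos (π * t / 5) - (1/8) * Real.cos (2 * π * t / 5))|)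
      (𝓝[≠] (5*(2*n+1) : ℝ)) Filter.atTop := by
  have hs : Real.sin (π * (5*(2*n+1) : ℝ) / 5) = 0 := by
    have h : π * (5*(2*n+1) : ℝ) / 5 = ((2*n+1 : ℕ) : ℝ) * π := by push_cast; ring
    rw [h, Real.sin_nat_mul_pi]
  have hc : Real.cos (π * (5*(2*n+1) : ℝ) / 5) = -1 := by
    have h : π * (5*(2*n+1) : ℝ) / 5 = π + (n : ℝ) * (2 * π) := by ring
    rw [h, Real.cos_add_nat_mul_two_pi, Real.cos_pi]
  have h2 : ∀ t : ℝ, 2 * π * t / 5 = 2 * (π * t / 5) := fun t => by ring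
  refine ⟨?_, ?_, ?_⟩
  · rw [h2, Real.cos_two_mul, hc]; norm_num
  · rw [h2, Real.sin_two_mul, hs]; ring
  have key : ∀ t : ℝ,
      |(-(Real.sqrt 2 / 4) * t * Real.sin (π * t / 5)
            + (Real.sqrt 2 / 8) * t * Real.sin (2 * π * t / 5)) * (Real.sqrt 2 * π / 10)
          / ((5/8) + (1/2) * Real.cos (π * t / 5) - (1/8) * Real.cos (2 * π * t / 5))|
      = |π / 5 * t * (1 - Real.cos (π * t / 5)) ^ 2 / (3 - Real.cos (π * t / 5))|
        * ‖(Real.sin (π * t / 5))⁻¹‖ := by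
    intro t
    rw [h2, Real.sin_two_mul, Real.cos_two_mul, Real.norm_eq_abs, ← abs_mul, ← abs_neg]
    congr 1
    have hsc := Real.sin_sq_add_cos_sq (π * t / 5)
    have hle := Real.cos_le_one (π * t / 5)
    generalize Real.cos (π * t / 5) = c at *
    generalize Real.sin (π * t / 5) = s at *
    have h3 : 3 - c ≠ 0 := by linarith
    have hq : Real.sqrt 2 * Real.sqrt 2 = 2 := Real.mul_self_sqrt (by norm_num)
    have hnum : (-(Real.sqrt 2 / 4) * t * s + Real.sqrt 2 / 8 * t * (2 * s * c))
        * (Real.sqrt 2 * π / 10) = -(π / 20 * t * s * (1 - c)) := by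
      linear_combination (-(π / 40) * t * s * (1 - c)) * hq
    have hden : 5 / 8 + 1 / 2 * c - 1 / 8 * (2 * c ^ 2 - 1) = (1 + c) * (3 - c) / 4 := by ring
    rw [hnum, hden]
    by_cases h0 : s = 0
    · simp [h0]
    · have h1 : 1 + c ≠ 0 := by
        intro h
        apply h0
        have : c = -1 := by linarith
        subst this
        nlinarith
      field_simp
      linear_combination (20 * t * (1 - c)) * hsc
  simp_rw [key]
  have hder : HasDerivAt (fun t : ℝ => Real.sin (π * t / 5))
      (Real.cos (π * (5*(2*n+1) : ℝ) / 5) * (π * 1 / 5)) (5*(2*n+1) : ℝ) :=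
    (((hasDerivAt_id _).const_mul π).div_const 5).sin
  have hne : Real.cos (π * (5*(2*n+1) : ℝ) / 5) * (π * 1 / 5) ≠ 0 := by
    rw [hc]; have := Real.pi_pos; intro h; linarith
  have ht := hder.tendsto_nhdsNE hne
  rw [hs] at ht
  have hinv := tendsto_norm_cobounded_atTop.comp (tendsto_inv₀_nhdsNE_zero.comp ht)
  have hA : ContinuousAt (fun t : ℝ =>
      |π / 5 * t * (1 - Real.cos (π * t / 5)) ^ 2 / (3 - Real.cos (π * t / 5))|)
      (5*(2*n+1) : ℝ) := by
    apply ContinuousAt.abs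
    apply ContinuousAt.div (by fun_prop) (by fun_prop)
    rw [hc]; norm_num
  have hA' := hA.tendsto.mono_left (nhdsWithin_le_nhds (s := {(5*(2*n+1) : ℝ)}ᶜ))
  refine Filter.Tendsto.pos_mul_atTop ?_ hA' hinv
  rw [hc, abs_pos]
  have := Real.pi_pos
  norm_num
  positivity
end
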